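/- The strain-relaxation source term preserves the determinant of the distortion field: let A : ℝ → GL₃(ℝ) be differentiable and satisfy the ODE A'(t) = −A(t)·M(t) − c(t)·A(t)·G̊(t), where M(t) is any 3×3 matrix, c(t) any scalar, and G̊(t) = G(t) − (tr G(t)/3) I is the trace-free deviator of the Finger tensor G(t) = A(t)ᵀ A(t). Then the determinant satisfies d/dt det A(t) = −det A(t) · tr M(t). In particular, along the pure relaxation dynamics (M = 0) the determinant det A, and hence the density ρ = ρ₀ det A, is exactly conserved. -/

import Mathlib

/-!
Writing the evolution equation as `A' = A·B` with `B = -M - c·G̊`, Jacobi's formula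
(`hasDerivAt_det_of_mul`) gives `(det A)' = det A · tr B`. The deviator `G̊` is trace-free
(`tr I = 3`), so `tr B = -tr M`. For `M = 0` the determinant has zero derivative everywhere
on `ℝ`, hence is constant.
-/

open Matrix

/-- Jacobi's formula in dimension three, for a curve whose entrywise derivative at `t` is
`A t * B`, proved by differentiating the
explicit expansion of the determinant. -/
lemma hasDerivAt_det_of_mul (A : ℝ → Matrix (Fin 3) (Fin 3) ℝ) (B : Matrix (Fin 3) (Fin 3) ℝ)
    (t : ℝ) (hA : ∀ i j, HasDerivAt (fun s => A s i j) ((A t * B) i j) t) :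
    HasDerivAt (fun s => (A s).det) ((A t).det * B.trace) t := by
  simp only [Matrix.det_fin_three]
  have triple (i j k l m n : Fin 3) := ((hA i j).fun_mul (hA k l)).fun_mul (hA m n)
  convert! (((((triple 0 0 1 1 2 2).fun_sub (triple 0 0 1 2 2 1)).fun_sub
    (triple 0 1 1 0 2 2)).fun_add (triple 0 1 1 2 2 0)).fun_add
    (triple 0 2 1 0 2 1)).fun_sub (triple 0 2 1 1 2 0) using 1
  simp only [Matrix.trace_fin_three, Matrix.mul_apply, Fin.sum_univ_three]
  ring

/-- The strain-relaxation source term preserves the determinant of the distortion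
field: if `A' = -A·M - c·A·G̊` with `G̊` the trace-free deviator of the Finger
tensor `G = Aᵀ A`, then `(det A)' = -det A · tr M`; in particular, along the pure
relaxation dynamics (`M = 0`) the determinant of `A` (hence the density
`ρ = ρ₀ det A`) is exactly conserved. -/
theorem strain_relaxation_preserves_det
    (A M G Gdev : ℝ → Matrix (Fin 3) (Fin 3) ℝ) (c : ℝ → ℝ)
    (hG : ∀ t, G t = (A t)ᵀ * A t)
    (hGdev : ∀ t, Gdev t = G t - (Matrix.trace (G t) / 3) • (1 : Matrix (Fin 3) (Fin 3) ℝ))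
    (hInv : ∀ t, IsUnit (A t).det)
    (hA : ∀ t i j, HasDerivAt (fun s => A s i j)
      ((-(A t * M t) - c t • (A t * Gdev t)) i j) t) :
    (∀ t, HasDerivAt (fun s => (A s).det) (-(A t).det * Matrix.trace (M t)) t) ∧
    ((∀ t, M t = 0) → ∀ t₁ t₂, (A t₁).det = (A t₂).det) := by
  have key : ∀ t, HasDerivAt (fun s => (A s).det) (-(A t).det * Matrix.trace (M t)) t := by
    intro t
    have hdev : (Gdev t).trace = 0 := by
      rw [hGdev, Matrix.trace_sub, Matrix.trace_smul, Matrix.trace_one]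
      simp
    have hB : -(A t * M t) - c t • (A t * Gdev t) = A t * (-M t - c t • Gdev t) := by
      rw [Matrix.mul_sub, Matrix.mul_neg, Matrix.mul_smul]
    have h := hasDerivAt_det_of_mul A (-M t - c t • Gdev t) t (fun i j => hB ▸ hA t i j)
    rw [Matrix.trace_sub, Matrix.trace_neg, Matrix.trace_smul, hdev, smul_zero, sub_zero] at h
    rwa [neg_mul, ← mul_neg]
  refine ⟨key, fun hM => ?_⟩
  refine is_const_of_deriv_eq_zero (fun t => (key t).differentiableAt) (fun t => ?_)
  rw [(key t).deriv, hM, Matrix.trace_zero, mul_zero]
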